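/- arXiv:0810.1814 — 4 statements merged into one kernel-verified Lean document; each statement's English description precedes it below -/
import Mathlib

section
/- Let 𝔽 be a field, G a finite group, H a normal subgroup of G, and V an 𝔽-linear representation of G which is semisimple as a module over the group algebra 𝔽[G]. Then V, with the restricted action, is semisimple as a module over the group algebra 𝔽[H]. -/
/-!
Let `N` be the `𝔽[H]`-socle of `V`, the sum of all simple `𝔽[H]`-submodules. Since `H` is normal,
each `g ∈ G` acts on `V` semilinearly over the automorphism of `𝔽[H]` induced by conjugation by
`g` (`conjSMul`), so it permutes the simple `𝔽[H]`-submodules and fixes `N`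
(`single_smul_mem`). Hence `N` is an
`𝔽[G]`-submodule and has an `𝔽[G]`-complement `C`. Were `C` to contain some `v ≠ 0`, the cyclic
module `𝔽[H] v`, being Artinian as `𝔽[H]` is finite-dimensional, would contain a simple
`𝔽[H]`-submodule (`exists_atom_le`); it would lie in both `C` and `N`, which is absurd. So `C = 0` and `N = V`.
-/

namespace CliffordRestriction

variable {𝔽 : Type*} [Field 𝔽] {G : Type*} [Group G] (H : Subgroup G)

/-- The ring homomorphism `𝔽[H] → 𝔽[G]` induced by the inclusion `H ≤ G`. -/
noncomputable abbrev incl (𝔽 : Type*) [Field 𝔽] : MonoidAlgebra 𝔽 H →+* MonoidAlgebra 𝔽 G :=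
  MonoidAlgebra.mapDomainRingHom 𝔽 H.subtype

/-- The endomorphism of `𝔽[H]` induced by conjugation by `g` on the normal subgroup `H`. -/
noncomputable abbrev conjHom (𝔽 : Type*) [Field 𝔽] [H.Normal] (g : G) :
    MonoidAlgebra 𝔽 H →+* MonoidAlgebra 𝔽 H :=
  MonoidAlgebra.mapDomainRingHom 𝔽 (MulAut.conjNormal g : MulAut H).toMonoidHom

lemma conjHom_comp [H.Normal] (g g' : G) (h : g * g' = 1) :
    (conjHom H 𝔽 g).comp (conjHom H 𝔽 g') = RingHom.id _ := by
  have key : ∀ x : H, MulAut.conjNormal g (MulAut.conjNormal g' x) = x := fun x => by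
    rw [← MulAut.mul_apply, ← map_mul, h, map_one, MulAut.one_apply]
  ext x <;> simp [key]

lemma single_mul_incl [H.Normal] (g : G) (r : MonoidAlgebra 𝔽 H) :
    MonoidAlgebra.single g 1 * incl H 𝔽 r =
      incl H 𝔽 (conjHom H 𝔽 g r) * MonoidAlgebra.single g 1 := by
  induction r using MonoidAlgebra.induction_linear with
  | zero => simp
  | add a b ha hb => simp only [map_add, mul_add, add_mul, ha, hb]
  | single h a => simp [MonoidAlgebra.single_mul_single]

variable {V : Type*} [AddCommGroup V] [Module (MonoidAlgebra 𝔽 H) V]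

/-- Over the Artinian ring `𝔽[H]`, every nonzero cyclic submodule contains a simple one. -/
lemma exists_atom_le [Finite H] {v : V} (hv : v ≠ 0) :
    ∃ m : Submodule (MonoidAlgebra 𝔽 H) V,
      IsAtom m ∧ m ≤ Submodule.span (MonoidAlgebra 𝔽 H) {v} := by
  have : Module.Finite 𝔽 (MonoidAlgebra 𝔽 H) := inferInstance
  have : IsArtinianRing (MonoidAlgebra 𝔽 H) := IsArtinianRing.of_finite 𝔽 _
  let P := Submodule.span (MonoidAlgebra 𝔽 H) {v}
  have : IsArtinian (MonoidAlgebra 𝔽 H) P :=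
    isArtinian_of_fg_of_artinian P (Submodule.fg_span_singleton v)
  have : Nontrivial P := Submodule.nontrivial_iff_ne_bot.2 (by simpa [P] using hv)
  obtain ⟨a, ha, -⟩ := (eq_bot_or_exists_atom_le (⊤ : Submodule (MonoidAlgebra 𝔽 H) P)).resolve_left
    top_ne_bot
  refine ⟨a.map P.subtype, ?_, Submodule.map_subtype_le P a⟩
  rw [← isSimpleModule_iff_isAtom] at ha ⊢
  exact (LinearEquiv.isSimpleModule_iff (M := a) (Submodule.equivSubtypeMap P a)).1 ha

variable [Module (MonoidAlgebra 𝔽 G) V]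

/-- The action of `g` on `V`, semilinear over conjugation by `g` on `𝔽[H]`. The hypothesis `hsmul`
says that the `𝔽[H]`-action is the restriction of the `𝔽[G]`-action. -/
noncomputable def conjSMul [H.Normal]
    (hsmul : ∀ (r : MonoidAlgebra 𝔽 H) (v : V), r • v = incl H 𝔽 r • v) (g : G) :
    V →ₛₗ[conjHom H 𝔽 g] V where
  toFun v := (MonoidAlgebra.single g 1 : MonoidAlgebra 𝔽 G) • v
  map_add' := smul_add _
  map_smul' r v := by
    rw [hsmul, hsmul, ← mul_smul, ← mul_smul, single_mul_incl]

lemma conjSMul_conjSMul [H.Normal]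
    (hsmul : ∀ (r : MonoidAlgebra 𝔽 H) (v : V), r • v = incl H 𝔽 r • v) (g g' : G)
    (h : g * g' = 1) (v : V) : conjSMul H hsmul g (conjSMul H hsmul g' v) = v := by
  change (MonoidAlgebra.single g 1 : MonoidAlgebra 𝔽 G) •
    (MonoidAlgebra.single g' 1 : MonoidAlgebra 𝔽 G) • v = v
  rw [← mul_smul, MonoidAlgebra.single_mul_single, h, mul_one, ← MonoidAlgebra.one_def, one_smul]

/-- The `𝔽[H]`-socle of `V` is stable under every `g ∈ G`. -/
lemma single_smul_mem [H.Normal]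
    (hsmul : ∀ (r : MonoidAlgebra 𝔽 H) (v : V), r • v = incl H 𝔽 r • v) (g : G) {v : V}
    (hv : v ∈ sSup {m : Submodule (MonoidAlgebra 𝔽 H) V | IsAtom m}) :
    (MonoidAlgebra.single g 1 : MonoidAlgebra 𝔽 G) • v ∈
      sSup {m : Submodule (MonoidAlgebra 𝔽 H) V | IsAtom m} := by
  have : RingHomInvPair (conjHom H 𝔽 g) (conjHom H 𝔽 g⁻¹) :=
    ⟨conjHom_comp H _ _ (inv_mul_cancel g), conjHom_comp H _ _ (mul_inv_cancel g)⟩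
  have : RingHomInvPair (conjHom H 𝔽 g⁻¹) (conjHom H 𝔽 g) := RingHomInvPair.symm _ _
  let e : V ≃ₛₗ[conjHom H 𝔽 g] V :=
    { conjSMul H hsmul g with
      invFun := conjSMul H hsmul g⁻¹
      left_inv := conjSMul_conjSMul H hsmul _ _ (inv_mul_cancel g)
      right_inv := conjSMul_conjSMul H hsmul _ _ (mul_inv_cancel g) }
  let E := Submodule.orderIsoMapComap e
  have h1 : E (sSup {m | IsAtom m}) ≤ sSup {m | IsAtom m} := by
    rw [E.map_sSup]
    exact iSup₂_le fun m hm => le_sSup ((E.isAtom_iff m).2 hm)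
  exact h1 (Submodule.mem_map.2 ⟨v, hv, rfl⟩)

/-- The theorem for an `𝔽[H]`-structure that agrees with the restriction of the `𝔽[G]`-structure. -/
theorem isSemisimple_of_smul_eq [Finite G] [H.Normal]
    (hsmul : ∀ (r : MonoidAlgebra 𝔽 H) (v : V), r • v = incl H 𝔽 r • v)
    (hV : IsSemisimpleModule (MonoidAlgebra 𝔽 G) V) :
    IsSemisimpleModule (MonoidAlgebra 𝔽 H) V := by
  let N : Submodule (MonoidAlgebra 𝔽 H) V := sSup {m | IsAtom m}
  let N' : Submodule (MonoidAlgebra 𝔽 G) V :=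
    { N.toAddSubmonoid with
      smul_mem' := fun s v hv => by
        change s • v ∈ N
        induction s using MonoidAlgebra.induction_linear with
        | zero => simp
        | add a b ha hb => rw [add_smul]; exact N.add_mem ha hb
        | single g a =>
          have : (MonoidAlgebra.single g a : MonoidAlgebra 𝔽 G) =
              incl H 𝔽 (MonoidAlgebra.single 1 a) * MonoidAlgebra.single g 1 := by
            simp [MonoidAlgebra.single_mul_single]
          rw [this, mul_smul, ← hsmul]
          exact N.smul_mem _ (single_smul_mem H hsmul g hv) }
  obtain ⟨C, hC⟩ := exists_isCompl N'
  have hCbot : C = ⊥ := by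
    refine (Submodule.eq_bot_iff C).2 fun v hv => by_contra fun hv0 => ?_
    obtain ⟨m, hm, hle⟩ := exists_atom_le (𝔽 := 𝔽) H hv0
    refine hm.1 ((Submodule.eq_bot_iff m).2 fun x hx => ?_)
    have hxN : x ∈ N' := (le_sSup hm : m ≤ N) hx
    have hxC : x ∈ C := by
      obtain ⟨r, rfl⟩ := Submodule.mem_span_singleton.1 (hle hx)
      rw [hsmul]
      exact C.smul_mem _ hv
    exact Submodule.disjoint_def.1 hC.disjoint x hxN hxC
  have hN' : N' = ⊤ := by simpa [hCbot] using hC.sup_eq_top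
  refine IsSemisimpleModule.of_sSup_simples_eq_top ?_
  simp only [isSimpleModule_iff_isAtom]
  refine Submodule.eq_top_iff'.2 fun x => ?_
  exact (Submodule.eq_top_iff'.1 hN' x : x ∈ N')

end CliffordRestriction


/-- **Statement 4.** Let `𝔽` be a field, `G` a finite group, `H` a normal subgroup of `G`, and
`V` an `𝔽[G]`-module which is semisimple. Then `V`, with the action restricted along the
inclusion `H ≤ G`, is semisimple as an `𝔽[H]`-module. -/
theorem isSemisimpleModule_restrict_of_normal {𝔽 : Type*} [Field 𝔽] {G : Type*} [Group G]
    [Finite G] (H : Subgroup G) [H.Normal] (V : Type*) [AddCommGroup V]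
    [Module (MonoidAlgebra 𝔽 G) V] (hV : IsSemisimpleModule (MonoidAlgebra 𝔽 G) V) :
    letI : Module (MonoidAlgebra 𝔽 H) V :=
      Module.compHom V (MonoidAlgebra.mapDomainRingHom 𝔽 H.subtype)
    IsSemisimpleModule (MonoidAlgebra 𝔽 H) V := by
  let : Module (MonoidAlgebra 𝔽 H) V :=
    Module.compHom V (MonoidAlgebra.mapDomainRingHom 𝔽 H.subtype)
  exact CliffordRestriction.isSemisimple_of_smul_eq H (fun _ _ => rfl) hV
end

section
/- Let 𝔽 be a field, let φ : G' → Q' be a surjective group homomorphism, let G be a subgroup of G' containing the kernel of φ, and set Q = φ(G). Let V be an 𝔽-linear representation of Q, regarded also as a representation of G via the restriction of φ. Then the map sending f to f ∘ φ is an isomorphism of 𝔽-linear representations of G' from Coind_Q^{Q'} V (with G' acting through φ) onto Coind_G^{G'} V. -/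
/-!
Precomposition with `φ` is visibly linear, equivariant and compatible with the two coinduction
conditions, and it is injective because `φ` is surjective. For surjectivity, an element `F` of
`Coind_G^{G'} V` is constant on the fibres of `φ`: two points of a fibre differ by left
multiplication by some `k ∈ ker φ ≤ G`, which acts on `V` through `φ k = 1`. So `F` descends
along `φ`.
-/

/-- **Statement 11.** Let `φ : G' → Q'` be a surjective group homomorphism, `G ≤ G'` a
subgroup containing `ker φ`, `Q = φ(G)`, and `V` an `𝔽`-linear representation `ρ` of `Q`,
regarded as a representation of `G` via `φ`. Then `f ↦ f ∘ φ` is an isomorphism of `𝔽`-linear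
representations of `G'` from `Coind_Q^{Q'} V` (with `G'` acting through `φ`) onto
`Coind_G^{G'} V`: it maps the one space of functions bijectively onto the other, it is
`𝔽`-linear, and it is equivariant for the `G'`-actions. -/
theorem coind_comap_iso
    {𝔽 : Type*} [Field 𝔽] {G' Q' : Type*} [Group G'] [Group Q']
    (φ : G' →* Q') (hφ : Function.Surjective φ) (G : Subgroup G') (hker : φ.ker ≤ G)
    {V : Type*} [AddCommGroup V] [Module 𝔽 V]
    (ρ : Representation 𝔽 (G.map φ) V) :
    (∀ f : Q' → V,
        (∀ (q : G.map φ) (x : Q'), f ((q : Q') * x) = ρ q (f x)) →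
        ∀ (g : G) (x : G'), (f ∘ φ) ((g : G') * x) =
          ρ ⟨φ g, ⟨(g : G'), g.2, rfl⟩⟩ ((f ∘ φ) x)) ∧
    Set.BijOn (fun f : Q' → V => f ∘ φ)
      {f : Q' → V | ∀ (q : G.map φ) (x : Q'), f ((q : Q') * x) = ρ q (f x)}
      {F : G' → V | ∀ (g : G) (x : G'), F ((g : G') * x) = ρ ⟨φ g, ⟨(g : G'), g.2, rfl⟩⟩ (F x)} ∧
    (∀ (a : 𝔽) (f : Q' → V), (a • f) ∘ φ = a • (f ∘ φ)) ∧
    (∀ f₁ f₂ : Q' → V, (f₁ + f₂) ∘ φ = f₁ ∘ φ + f₂ ∘ φ) ∧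
    (∀ (f : Q' → V) (g : G'), (fun x : Q' => f (x * φ g)) ∘ φ = fun x : G' => (f ∘ φ) (x * g)) := by
  have hmaps : ∀ f : Q' → V,
      (∀ (q : G.map φ) (x : Q'), f ((q : Q') * x) = ρ q (f x)) →
      ∀ (g : G) (x : G'), (f ∘ φ) ((g : G') * x) =
        ρ ⟨φ g, ⟨(g : G'), g.2, rfl⟩⟩ ((f ∘ φ) x) := by
    intro f hf g x
    simpa using hf ⟨φ g, ⟨(g : G'), g.2, rfl⟩⟩ (φ x)
  refine ⟨hmaps, ⟨hmaps, hφ.injective_comp_right.injOn, ?_⟩,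
    fun _ _ => rfl, fun _ _ => rfl, fun f g => by ext x; simp⟩
  intro F hF
  have hconst : ∀ x y : G', φ x = φ y → F x = F y := by
    intro x y hxy
    have hk : φ (x * y⁻¹) = 1 := by simp [hxy]
    have h := hF ⟨x * y⁻¹, hker hk⟩ y
    have h1 : (⟨φ (x * y⁻¹), ⟨x * y⁻¹, hker hk, rfl⟩⟩ : G.map φ) = 1 := Subtype.ext hk
    rw [h1] at h
    simpa using h
  -- The descended function evaluates `F` on an arbitrary section of `φ`.
  have hdesc : ∀ x : G', F (Function.surjInv hφ (φ x)) = F x :=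
    fun x => hconst _ _ (Function.surjInv_eq hφ (φ x))
  refine ⟨fun q => F (Function.surjInv hφ q), ?_, funext hdesc⟩
  rintro ⟨_, g, hg, rfl⟩ x
  obtain ⟨x, rfl⟩ := hφ x
  simp only [← map_mul, hdesc]
  exact hF ⟨g, hg⟩ x
end

section
/- Let F be a number field with ring of integers 𝒪_F, let 𝔞 be a nonzero ideal of 𝒪_F, and for each real embedding σ of F let ε_σ ∈ {+1, −1} be a prescribed sign. Then there exists a ∈ 𝒪_F such that a ≡ 1 (mod 𝔞) and for every real embedding σ of F the real number σ(a) has sign ε_σ (i.e. ε_σ·σ(a) > 0). -/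
/-!
By weak approximation at the infinite places, some `y ∈ F` satisfies `|σ(y) - ε σ| < 1`, and hence
has the prescribed sign, at every real embedding `σ`. Writing `y = p / q` with `p, q` integral, the
integer `p * q = y * q ^ 2` has the same signs. If `N > 0` is the absolute norm of `𝔞`, which lies
in `𝔞`, then `1 + k * N * (p * q)` is congruent to `1` modulo `𝔞`, and for a large natural number
`k` the second summand dominates and decides the sign at each of the finitely many embeddings.
-/

open NumberField

lemma exists_field_element_with_prescribed_signs (F : Type*) [Field F] [NumberField F]
    (ε : (F →+* ℝ) → ℝ) (hε : ∀ σ : F →+* ℝ, ε σ = 1 ∨ ε σ = -1) :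
    ∃ y : F, ∀ σ : F →+* ℝ, 0 < ε σ * σ y := by
  classical
  let pl : (F →+* ℝ) → InfinitePlace F := fun σ => InfinitePlace.mk (Complex.ofRealHom.comp σ)
  have hpl : Function.Injective pl := by
    intro σ τ h
    ext x
    rcases InfinitePlace.mk_eq_iff.mp h with h | h
    · simpa using RingHom.congr_fun h x
    · simpa [ComplexEmbedding.conjugate] using RingHom.congr_fun h x
  -- The approximation target: the sign of the real embedding at its place, arbitrary elsewhere.
  let t : InfinitePlace F → F := fun w => if ∃ σ, pl σ = w ∧ ε σ = 1 then 1 else -1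
  have ht : ∀ σ, σ (t (pl σ)) = ε σ := by
    intro σ
    by_cases h : ε σ = 1
    · have : ∃ τ, pl τ = pl σ ∧ ε τ = 1 := ⟨σ, rfl, h⟩
      simp [t, this, h]
    · have : ¬ ∃ τ, pl τ = pl σ ∧ ε τ = 1 := by
        rintro ⟨τ, h1, h2⟩
        exact h (hpl h1 ▸ h2)
      have h' := (hε σ).resolve_left h
      simp only [t, if_neg this, h', map_neg, map_one]
  obtain ⟨y, hy⟩ := Metric.denseRange_iff.mp (InfinitePlace.denseRange_algebraMap_pi F)
    (fun w => WithAbs.toAbs w.1 (t w)) 1 one_pos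
  refine ⟨y, fun σ => ?_⟩
  have h1 := (dist_pi_lt_iff one_pos).mp hy (pl σ)
  have h2 : |ε σ - σ y| < 1 := by
    rw [dist_eq_norm] at h1
    have h3 : (pl σ) (t (pl σ) - y) < 1 := h1
    have h4 : (pl σ) (t (pl σ) - y) = |σ (t (pl σ) - y)| := by
      simp only [pl, InfinitePlace.apply, RingHom.comp_apply, Complex.ofRealHom_eq_coe,
        Complex.norm_real, Real.norm_eq_abs]
    rwa [h4, map_sub, ht] at h3
  rw [abs_lt] at h2
  rcases hε σ with h | h <;> rw [h] at h2 ⊢ <;> linarith [h2.1, h2.2]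

lemma exists_integer_with_prescribed_signs (F : Type*) [Field F] [NumberField F]
    (ε : (F →+* ℝ) → ℝ) (hε : ∀ σ : F →+* ℝ, ε σ = 1 ∨ ε σ = -1) :
    ∃ b : 𝓞 F, ∀ σ : F →+* ℝ, 0 < ε σ * σ (b : F) := by
  obtain ⟨y, hy⟩ := exists_field_element_with_prescribed_signs F ε hε
  obtain ⟨p, q, hq, rfl⟩ := IsFractionRing.div_surjective (A := 𝓞 F) y
  have hq0 : (q : F) ≠ 0 := by
    simpa using nonZeroDivisors.ne_zero hq
  refine ⟨p * q, fun σ => ?_⟩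
  have hs : σ (q : F) ≠ 0 := by simpa using hq0
  have h := mul_pos (hy σ) (pow_pos (abs_pos.mpr hs) 2)
  rw [sq_abs, map_div₀] at h
  have e : ε σ * σ ((p * q : 𝓞 F) : F) = ε σ * (σ (p : F) / σ (q : F)) * σ (q : F) ^ 2 := by
    simp only [map_mul]
    field_simp
  rw [e]
  exact h

/-- **Statement 13.** Let `F` be a number field, `𝔞` a nonzero ideal of `𝒪_F`, and for every
real embedding `σ : F → ℝ` a sign `ε σ ∈ {+1, -1}`. Then there is `a ∈ 𝒪_F` with
`a ≡ 1 (mod 𝔞)` and such that `σ(a)` has sign `ε σ` for every real embedding `σ`. -/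
theorem exists_integer_congruent_one_with_prescribed_signs
    (F : Type*) [Field F] [NumberField F]
    (𝔞 : Ideal (NumberField.RingOfIntegers F)) (h𝔞 : 𝔞 ≠ 0)
    (ε : (F →+* ℝ) → ℝ) (hε : ∀ σ : F →+* ℝ, ε σ = 1 ∨ ε σ = -1) :
    ∃ a : NumberField.RingOfIntegers F,
      a - 1 ∈ 𝔞 ∧ ∀ σ : F →+* ℝ, 0 < ε σ * σ (a : F) := by
  obtain ⟨b, hb⟩ := exists_integer_with_prescribed_signs F ε hε
  have hN : 1 ≤ Ideal.absNorm 𝔞 :=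
    Nat.one_le_iff_ne_zero.mpr (by rwa [Ne, Ideal.absNorm_eq_zero_iff])
  have hfin : Finite (F →+* ℝ) :=
    Finite.of_injective (fun σ : F →+* ℝ => Complex.ofRealHom.comp σ) fun σ τ h => by
      ext x
      simpa using RingHom.congr_fun h x
  obtain ⟨M, hM⟩ := (Set.finite_range fun σ : F →+* ℝ => (ε σ * σ (b : F))⁻¹).bddAbove
  obtain ⟨k, hk⟩ := exists_nat_gt M
  refine ⟨1 + k * Ideal.absNorm 𝔞 * b, ?_, fun σ => ?_⟩
  · rw [add_sub_cancel_left]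
    exact 𝔞.mul_mem_right _ (𝔞.mul_mem_left _ (Ideal.absNorm_mem 𝔞))
  · have h1 : (ε σ * σ (b : F))⁻¹ < k := (hM ⟨σ, rfl⟩).trans_lt hk
    have h2 : 1 < k * (ε σ * σ (b : F)) := (inv_lt_iff_one_lt_mul₀ (hb σ)).mp h1
    have hN' : (1 : ℝ) ≤ Ideal.absNorm 𝔞 := by exact_mod_cast hN
    have h3 : 1 < Ideal.absNorm 𝔞 * (k * (ε σ * σ (b : F))) := by nlinarith
    have e : ε σ * σ ((1 + k * Ideal.absNorm 𝔞 * b : 𝓞 F) : F)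
        = ε σ + Ideal.absNorm 𝔞 * (k * (ε σ * σ (b : F))) := by
      simp only [map_add, map_mul, map_one, map_natCast]
      ring
    rw [e]
    rcases hε σ with h | h <;> linarith
end

section
/- Let C be an abelian group, A a C-graded ring with grading A = ⊕_{c ∈ C} A_c, and 𝔽 a field. Let Φ, Ψ : A → 𝔽 be ring homomorphisms such that Φ(a) = Ψ(a) for every a ∈ A_1, where 1 is the identity of C. Assume that for every c ∈ C there exists a ∈ A_c with Ψ(a) ≠ 0. Then there exists a group homomorphism χ : C → 𝔽ˣ such that Φ(a) = χ(c)·Ψ(a) for every c ∈ C and every a ∈ A_c. -/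
/-!
Multiplying by an element `d` of degree `c⁻¹` with `Ψ d ≠ 0` moves degree `c` into degree `1`, where
`Φ` and `Ψ` agree. Hence `Φ` is a nonzero scalar multiple of `Ψ` on each component. The scalar is
unique because `Ψ` does not vanish on the component, and uniqueness in degree `c * c'` makes it
multiplicative in the degree.
-/

/-- **Statement 15.** Let `C` be an abelian group, `A` a `C`-graded ring with grading
`A = ⊕_{c ∈ C} A_c`, and `𝔽` a field. If two ring homomorphisms `Φ, Ψ : A → 𝔽` agree on the
identity component `A_1`, and every component contains an element not killed by `Ψ`, then
there is a character `χ : C → 𝔽ˣ` with `Φ(a) = χ(c)·Ψ(a)` for all `c ∈ C` and `a ∈ A_c`. -/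
theorem graded_ring_hom_twist_by_character
    {C : Type*} [CommGroup C] [DecidableEq C] {A : Type*} [Ring A] {𝔽 : Type*} [Field 𝔽]
    (𝒜 : C → AddSubgroup A)
    (hinternal : DirectSum.IsInternal fun c : C => 𝒜 c)
    (hone : (1 : A) ∈ 𝒜 (1 : C))
    (hmul : ∀ (c c' : C) (a b : A), a ∈ 𝒜 c → b ∈ 𝒜 c' → a * b ∈ 𝒜 (c * c'))
    (Φ Ψ : A →+* 𝔽)
    (hagree : ∀ a ∈ 𝒜 (1 : C), Φ a = Ψ a)
    (hne : ∀ c : C, ∃ a ∈ 𝒜 c, Ψ a ≠ 0) :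
    ∃ χ : C →* 𝔽ˣ, ∀ (c : C), ∀ a ∈ 𝒜 c, Φ a = (χ c : 𝔽) * Ψ a := by
  -- For `d ∈ 𝒜 c⁻¹` and `a ∈ 𝒜 c` the product `a * d` has degree `1`, so
  -- `Φ a * Φ d = Ψ a * Ψ d`; the scalar in degree `c` is therefore `Ψ d / Φ d`.
  have key : ∀ c : C, ∃ u : 𝔽ˣ, ∀ a ∈ 𝒜 c, Φ a = (u : 𝔽) * Ψ a := by
    intro c
    obtain ⟨d, hd, hd0⟩ := hne c⁻¹
    obtain ⟨e, he, he0⟩ := hne c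
    have h : ∀ a ∈ 𝒜 c, Φ a * Φ d = Ψ a * Ψ d := by
      intro a ha
      have h1 := hmul c c⁻¹ a d ha hd
      rw [mul_inv_cancel] at h1
      simpa using hagree _ h1
    have hΦd : Φ d ≠ 0 := right_ne_zero_of_mul (h e he ▸ mul_ne_zero he0 hd0)
    refine ⟨Units.mk0 (Ψ d / Φ d) (div_ne_zero hd0 hΦd), fun a ha => ?_⟩
    rw [Units.val_mk0, div_mul_eq_mul_div, eq_div_iff hΦd, h a ha, mul_comm]
  choose u hu using key
  refine ⟨MonoidHom.mk' u fun c c' => ?_, hu⟩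
  -- Evaluating on a product of elements not killed by `Ψ` forces `u` to be multiplicative.
  obtain ⟨a, ha, ha0⟩ := hne c
  obtain ⟨b, hb, hb0⟩ := hne c'
  have h := hu _ _ (hmul c c' a b ha hb)
  rw [map_mul, map_mul, hu c a ha, hu c' b hb, mul_mul_mul_comm] at h
  exact Units.ext (mul_right_cancel₀ (mul_ne_zero ha0 hb0) h).symm
end
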